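/- Let n ≥ 3 and let λ be a partition of n. Then both Σ_{π ∈ C_λ} occ₍₁₋₃₋₂₎(π) and Σ_{π ∈ C_λ} occ₍₂₋₁₋₃₎(π) are equal to |C_λ| · ( C(n,3)/6 + (n+1)(n−3)·X₁/60 − (n+1)·X₂/60 − (n+1)·X₃/20 − X₄/30 ), where occ₍₁₋₃₋₂₎(π) = #{(i,j,k) : 1 ≤ i < j < k ≤ n, π(i) < π(k) < π(j)} and occ₍₂₋₁₋₃₎(π) = #{(i,j,k) : 1 ≤ i < j < k ≤ n, π(j) < π(i) < π(k)} count occurrences of the classical patterns 132 and 213 in π. -/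

import Mathlib

open Equiv Finset

/-- The conjugacy class of permutations of `Fin n` with cycle type `lam`
(cycle type includes fixed points as parts of size 1, via `Equiv.Perm.partition`). -/
def conjClass (n : ℕ) (lam : n.Partition) : Finset (Equiv.Perm (Fin n)) :=
  Finset.univ.filter fun π => (Equiv.Perm.partition π).parts = lam.parts

/-!
A conjugacy class is closed under conjugation by a uniformly random permutation `σ`, so the average
of `occ₍₁₋₃₋₂₎` over the class of `π` is the expectation of `occ₍₁₋₃₋₂₎(σπσ⁻¹)`. Conjugating by `σ`
relabels the points `(i, π i)` of the graph of `π`, so this expectation is the sum, over ordered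
triples of distinct points, of the probability that `σ` maps the triple to an occurrence of 132. As
`σ` puts the at most six coordinates of the triple in uniformly random order, that probability
depends only on which coordinates coincide, that is, on the indicators `π i = j` for `i`, `j` in the
triple. Symmetrised over the six orders of the triple, it is a polynomial in these indicators, found
by counting permutations of six letters. Summing its monomials over triples of distinct points gives
expressions in the numbers of fixed points of `π`, `π²` and `π³`, hence in `p`, `q` and `r`.
Reversing both positions and values, which is a conjugation, exchanges the patterns 132 and 213.
-/

open Function
open scoped BigOperators

section MinimalPeriod

variable {α : Type*} [Fintype α] [DecidableEq α] (π : Perm α)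

theorem minimalPeriod_eq_card_support_cycleOf {x : α} (hx : π x ≠ x) :
    minimalPeriod π x = #(π.cycleOf x).support := by
  have hcycle := π.isCycle_cycleOf hx
  have cycleOf_pow_eq_one_iff (k : ℕ) : π.cycleOf x ^ k = 1 ↔ IsPeriodicPt π k x := by
    rw [hcycle.pow_eq_one_iff' (x := x) (by simpa using hx), Perm.cycleOf_pow_apply_self,
      IsPeriodicPt, Perm.iterate_eq_pow, IsFixedPt]
  rw [← hcycle.orderOf]
  exact Nat.dvd_antisymm
    (((cycleOf_pow_eq_one_iff _).1 (pow_orderOf_eq_one _)).minimalPeriod_dvd)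
    (orderOf_dvd_of_pow_eq_one ((cycleOf_pow_eq_one_iff _).2 (isPeriodicPt_minimalPeriod π x)))

theorem card_filter_minimalPeriod_eq_one :
    #{x | minimalPeriod π x = 1} = π.partition.parts.count 1 := by
  have one_notMem : 1 ∉ π.cycleType := fun h => (Perm.one_lt_of_mem_cycleType h).false
  have filter_eq : ({x | minimalPeriod π x = 1} : Finset α) = π.supportᶜ := by
    ext x
    simp [minimalPeriod_eq_one_iff_isFixedPt, IsFixedPt]
  rw [filter_eq, card_compl, Perm.parts_partition, Multiset.count_add,
    Multiset.count_replicate_self, Multiset.count_eq_zero_of_notMem one_notMem, zero_add]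

theorem filter_minimalPeriod_eq_biUnion_support {k : ℕ} (hk : k ≠ 1) :
    ({x | minimalPeriod π x = k} : Finset α) =
      {c ∈ π.cycleFactorsFinset | #c.support = k}.biUnion Perm.support := by
  ext x
  simp only [mem_filter, mem_univ, true_and, mem_biUnion]
  constructor
  · intro hper
    have hx : π x ≠ x := fun hfix => hk (hper ▸ minimalPeriod_eq_one_iff_isFixedPt.2 hfix)
    exact ⟨π.cycleOf x, ⟨Perm.cycleOf_mem_cycleFactorsFinset_iff.2 (Perm.mem_support.2 hx),
      (minimalPeriod_eq_card_support_cycleOf π hx).symm.trans hper⟩, by simpa using hx⟩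
  · rintro ⟨c, ⟨hc, rfl⟩, hxc⟩
    have hx : π x ≠ x := Perm.mem_support.1 (Perm.mem_cycleFactorsFinset_support_le hc hxc)
    rw [minimalPeriod_eq_card_support_cycleOf π hx, ← Perm.cycle_is_cycleOf hxc hc]

theorem card_filter_minimalPeriod_eq (k : ℕ) :
    #{x | minimalPeriod π x = k} = k * π.partition.parts.count k := by
  rcases eq_or_ne k 1 with rfl | hk
  · rw [card_filter_minimalPeriod_eq_one, one_mul]
  have count_eq : π.partition.parts.count k = #{c ∈ π.cycleFactorsFinset | #c.support = k} := by
    rw [Perm.parts_partition, Multiset.count_add, Multiset.count_replicate, if_neg hk.symm,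
      Perm.cycleType_def, Multiset.count_map, add_zero]
    simp only [comp_apply, eq_comm (a := k)]
    rfl
  rw [filter_minimalPeriod_eq_biUnion_support π hk, card_biUnion, count_eq, mul_comm]
  · exact sum_const_nat fun c hc => (mem_filter.1 hc).2
  · exact fun c hc d hd hcd => (π.cycleFactorsFinset_pairwise_disjoint (mem_filter.1 hc).1
      (mem_filter.1 hd).1 hcd).disjoint_support

end MinimalPeriod

section RandomOrder

theorem exists_equiv_fin_lt_on_eq {ι α : Type*} [Fintype ι] [LinearOrder α] {y : ι → α}
    (hy : Injective y) :
    ∃ e : ι ≃ Fin (Fintype.card ι), ((· < ·) on e) = ((· < ·) on y) := by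
  classical
  let rank := Fintype.orderIsoFinOfCardEq (Set.range y) (Set.card_range_of_injective hy)
  refine ⟨(ofInjective y hy).trans rank.symm.toEquiv, ?_⟩
  funext a b
  exact propext rank.symm.lt_iff_lt

theorem expect_lt_on_perm_comp {ι α M : Type*} [Fintype ι] [DecidableEq ι] [Fintype α]
    [LinearOrder α] [AddCommMonoid M] [Module ℚ≥0 M] {y : ι → α} (hy : Injective y)
    (F : (ι → ι → Prop) → M) :
    𝔼 σ : Perm α, F ((· < ·) on σ ∘ y) = 𝔼 e : ι ≃ Fin (Fintype.card ι), F ((· < ·) on e) := by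
  have relabel (ρ : Perm ι) :
      𝔼 σ : Perm α, F ((· < ·) on σ ∘ y) = 𝔼 σ : Perm α, F ((· < ·) on σ ∘ y ∘ ρ) := by
    let ρ' : Perm α := ρ.viaFintypeEmbedding ⟨y, hy⟩
    have hρ' : ρ' ∘ y = y ∘ ρ := funext (ρ.viaFintypeEmbedding_apply_image ⟨y, hy⟩)
    refine (Fintype.expect_equiv (Equiv.mulRight ρ') _ _ fun σ => ?_).symm
    rw [coe_mulRight, Perm.coe_mul, comp_assoc, hρ']
  have standardize (σ : Perm α) : 𝔼 ρ : Perm ι, F ((· < ·) on σ ∘ y ∘ ρ) =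
      𝔼 e : ι ≃ Fin (Fintype.card ι), F ((· < ·) on e) := by
    obtain ⟨e, he⟩ := exists_equiv_fin_lt_on_eq (σ.injective.comp hy)
    refine Fintype.expect_equiv (Equiv.equivCongr (Equiv.refl ι) e) _ _ fun ρ => ?_
    congr 1
    funext a b
    exact (congrFun₂ he (ρ a) (ρ b)).symm
  calc 𝔼 σ : Perm α, F ((· < ·) on σ ∘ y)
      = 𝔼 _ρ : Perm ι, 𝔼 σ : Perm α, F ((· < ·) on σ ∘ y) := (Fintype.expect_const _).symm
    _ = 𝔼 ρ : Perm ι, 𝔼 σ : Perm α, F ((· < ·) on σ ∘ y ∘ ρ) :=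
      expect_congr rfl fun ρ _ => relabel ρ
    _ = 𝔼 σ : Perm α, 𝔼 ρ : Perm ι, F ((· < ·) on σ ∘ y ∘ ρ) := expect_comm _ _ _
    _ = 𝔼 e : ι ≃ Fin (Fintype.card ι), F ((· < ·) on e) := by
      simp only [standardize, Fintype.expect_const]

end RandomOrder

section OccurrenceProbability

/-- The points `P`, `Q`, `R`, as (position, value) pairs, form an occurrence of the pattern 132 in
this order, positions and values both being compared by `r`. -/
def IsOcc132 {α : Type*} (r : α → α → Prop) (P Q R : α × α) : Prop :=
  r P.1 Q.1 ∧ r Q.1 R.1 ∧ r P.2 R.2 ∧ r R.2 Q.2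

instance {α : Type*} (r : α → α → Prop) [DecidableRel r] (P Q R : α × α) :
    Decidable (IsOcc132 r P Q R) :=
  inferInstanceAs (Decidable (_ ∧ _ ∧ _ ∧ _))

/-- The probability that a uniformly random permutation, applied to all coordinates, turns
the points `P`, `Q`, `R` into an occurrence of the pattern 132. -/
def occ132Prob {α : Type*} [Fintype α] [LinearOrder α] (P Q R : α × α) : ℚ :=
  𝔼 σ : Perm α, if IsOcc132 (· < ·) (P.map σ σ) (Q.map σ σ) (R.map σ σ) then 1 else 0

theorem occ132Prob_map_congr {ι α β : Type*} [Finite ι] [Fintype α] [LinearOrder α]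
    [Fintype β] [LinearOrder β] {y : ι → α} {z : ι → β}
    (hy : Injective y) (hz : Injective z) (P Q R : ι × ι) :
    occ132Prob (P.map y y) (Q.map y y) (R.map y y) =
      occ132Prob (P.map z z) (Q.map z z) (R.map z z) := by
  classical
  have := Fintype.ofFinite ι
  let F (r : ι → ι → Prop) : ℚ := if IsOcc132 r P Q R then 1 else 0
  calc occ132Prob (P.map y y) (Q.map y y) (R.map y y)
      = 𝔼 σ : Perm α, F ((· < ·) on σ ∘ y) := expect_congr rfl fun σ _ => by congr
    _ = 𝔼 e : ι ≃ Fin (Fintype.card ι), F ((· < ·) on e) := expect_lt_on_perm_comp hy F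
    _ = 𝔼 τ : Perm β, F ((· < ·) on τ ∘ z) := (expect_lt_on_perm_comp hz F).symm
    _ = occ132Prob (P.map z z) (Q.map z z) (R.map z z) :=
      expect_congr rfl fun τ _ => by symm; congr

/-- The sum of `f` over the six orderings of its arguments. -/
def symmSum {ι M : Type*} [Add M] (f : ι → ι → ι → M) (i j k : ι) : M :=
  f i j k + f i k j + f j i k + f j k i + f k i j + f k j i

/-- The indicator that the value of the point `P` is the position of the point `Q`. -/
def link {α : Type*} [DecidableEq α] (P Q : α × α) : ℚ := if P.2 = Q.1 then 1 else 0

/-- The polynomial in `D` whose symmetrisation, at `D = link`, is 180 times that of `occ132Prob`.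
Its coefficients solve the linear equations that express this for each way in which the coordinates
of three points with distinct positions and distinct values can coincide. -/
def linkPoly {ι R : Type*} [Ring R] (D : ι → ι → R) (i j k : ι) : R :=
  5 + 3 * D i i - 3 * D i j + 3 * (D i j * D j i) - 6 * (D i i * D j j) + 12 * (D i i * D j k)
    - 9 * (D i j * D j k) - 2 * (D i i * D j j * D k k) + 2 * (D i j * D j k * D k i)

/-- The number of permutations of six letters that turn three points into an occurrence of 132.
Positions are filtered before values so that kernel evaluation over many values computes the
position filter only once. -/
def occ132Count : (P Q R : Fin 6 × Fin 6) → ℚ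
  | (i, u), (j, v), (k, w) =>
    #{τ ∈ {τ : Perm (Fin 6) | τ i < τ j ∧ τ j < τ k} | τ u < τ w ∧ τ w < τ v}

set_option maxRecDepth 100000 in
theorem symmSum_occ132Count : ∀ u v w : Fin 6, u ≠ v → u ≠ w → v ≠ w →
    symmSum occ132Count (0, u) (1, v) (2, w) =
      4 * symmSum (linkPoly link) (0, u) (1, v) (2, w) := by
  decide +kernel

theorem occ132Prob_fin_six (P Q R : Fin 6 × Fin 6) :
    occ132Prob P Q R = occ132Count P Q R / 720 := by
  have card_perm : Fintype.card (Perm (Fin 6)) = 720 := by simp [Fintype.card_perm, Nat.factorial]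
  have count_eq : (#{τ : Perm (Fin 6) | IsOcc132 (· < ·) (P.map τ τ) (Q.map τ τ) (R.map τ τ)} : ℚ)
      = occ132Count P Q R := by
    rw [occ132Count, filter_filter]
    exact congrArg (fun s => (#s : ℚ)) (filter_congr fun τ _ => and_assoc.symm)
  rw [occ132Prob, Fintype.expect_eq_sum_div_card, sum_boole, card_perm, count_eq, Nat.cast_ofNat]

theorem symmSum_occ132Prob_fin_six {u v w : Fin 6} (huv : u ≠ v) (huw : u ≠ w) (hvw : v ≠ w) :
    180 * symmSum occ132Prob (0, u) (1, v) (2, w) =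
      symmSum (linkPoly link) (0, u) (1, v) (2, w) := by
  have count := symmSum_occ132Count u v w huv huw hvw
  simp only [symmSum, occ132Prob_fin_six] at count ⊢
  linear_combination count / 4

theorem link_map {ι α : Type*} [DecidableEq ι] [DecidableEq α] {y : ι → α}
    (hy : Injective y) (P Q : ι × ι) : link (P.map y y) (Q.map y y) = link P Q :=
  if_congr hy.eq_iff rfl rfl

theorem exists_injective_comp_eq {ι β γ : Type*} [Finite ι] [Finite β] [Finite γ]
    (hcard : Nat.card γ ≤ Nat.card β) {x : ι → γ} {z : ι → β} (hx : Injective x)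
    (hz : Injective z) : ∃ g : γ → β, Injective g ∧ g ∘ x = z := by
  have := Fintype.ofFinite β
  have := Fintype.ofFinite γ
  obtain ⟨f⟩ : Nonempty (γ ↪ β) := Embedding.nonempty_of_card_le (by simpa using hcard)
  obtain ⟨ρ, hρ⟩ := Perm.exists_extending_pair (f ∘ x) z (f.injective.comp hx) hz
  exact ⟨ρ ∘ f, ρ.injective.comp f.injective, funext hρ⟩

theorem exists_fin_six_model {α : Type*} [Fintype α] [LinearOrder α] {P : Fin 3 → α × α}
    (hfst : Injective (Prod.fst ∘ P)) (hsnd : Injective (Prod.snd ∘ P)) :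
    ∃ v : Fin 3 → Fin 6, Injective v ∧ ∀ a b c,
      occ132Prob (P a) (P b) (P c) =
        occ132Prob (Fin.castAdd 3 a, v a) (Fin.castAdd 3 b, v b) (Fin.castAdd 3 c, v c) ∧
      link (P a) (P b) = link (Fin.castAdd 3 a, v a) (Fin.castAdd 3 b, v b) := by
  let coords : Fin 3 ⊕ Fin 3 → α := Sum.elim (Prod.fst ∘ P) (Prod.snd ∘ P)
  let P' (a : Fin 3) : Set.range coords × Set.range coords :=
    (⟨(P a).1, .inl a, rfl⟩, ⟨(P a).2, .inr a, rfl⟩)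
  have hfst' : Injective (Prod.fst ∘ P') := fun a b h => hfst (congrArg Subtype.val h)
  have hsnd' : Injective (Prod.snd ∘ P') := fun a b h => hsnd (congrArg Subtype.val h)
  have hcard : Nat.card (Set.range coords) ≤ Nat.card (Fin 6) := by
    simpa using Finite.card_range_le coords
  obtain ⟨g, hg, hgfst⟩ := exists_injective_comp_eq hcard hfst' (Fin.castAdd_injective 3 3)
  refine ⟨g ∘ Prod.snd ∘ P', hg.comp hsnd', fun a b c => ?_⟩
  simp only [← hgfst]
  exact ⟨occ132Prob_map_congr Subtype.val_injective hg (P' a) (P' b) (P' c),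
    (link_map Subtype.val_injective (P' a) (P' b)).trans (link_map hg (P' a) (P' b)).symm⟩

theorem symmSum_occ132Prob {α : Type*} [Fintype α] [LinearOrder α] {P : Fin 3 → α × α}
    (hfst : Injective (Prod.fst ∘ P)) (hsnd : Injective (Prod.snd ∘ P)) :
    180 * symmSum occ132Prob (P 0) (P 1) (P 2) = symmSum (linkPoly link) (P 0) (P 1) (P 2) := by
  obtain ⟨v, hv, model⟩ := exists_fin_six_model hfst hsnd
  have prob_eq (a b c : Fin 3) := (model a b c).1
  have link_eq (a b : Fin 3) := (model a b 0).2
  calc 180 * symmSum occ132Prob (P 0) (P 1) (P 2)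
      = 180 * symmSum occ132Prob (0, v 0) (1, v 1) (2, v 2) := by
        simp only [symmSum, prob_eq]
        rfl
    _ = symmSum (linkPoly link) (0, v 0) (1, v 1) (2, v 2) :=
        symmSum_occ132Prob_fin_six (hv.ne (by decide)) (hv.ne (by decide)) (hv.ne (by decide))
    _ = symmSum (linkPoly link) (P 0) (P 1) (P 2) := by
        simp only [symmSum, linkPoly, link_eq]
        rfl

end OccurrenceProbability

section DistinctSum

variable {ι R : Type*} [Fintype ι] [DecidableEq ι] [CommRing R]

/-- The sum of `f` over all ordered triples of distinct elements. -/
def distinctSum {M : Type*} [AddCommMonoid M] (f : ι → ι → ι → M) : M :=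
  ∑ i, ∑ j, ∑ k, if i ≠ j ∧ i ≠ k ∧ j ≠ k then f i j k else 0

theorem distinctSum_congr {M : Type*} [AddCommMonoid M] {f g : ι → ι → ι → M}
    (h : ∀ i j k, i ≠ j → i ≠ k → j ≠ k → f i j k = g i j k) : distinctSum f = distinctSum g := by
  refine sum_congr rfl fun i _ => sum_congr rfl fun j _ => sum_congr rfl fun k _ => ?_
  exact ite_congr rfl (fun hijk => h i j k hijk.1 hijk.2.1 hijk.2.2) fun _ => rfl

theorem distinctSum_add {M : Type*} [AddCommMonoid M] (f g : ι → ι → ι → M) :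
    distinctSum (fun i j k => f i j k + g i j k) = distinctSum f + distinctSum g := by
  simp only [distinctSum, ← sum_add_distrib, ite_add_ite, add_zero]

theorem distinctSum_sub {M : Type*} [AddCommGroup M] (f g : ι → ι → ι → M) :
    distinctSum (fun i j k => f i j k - g i j k) = distinctSum f - distinctSum g := by
  simp only [distinctSum, ← sum_sub_distrib, ite_sub_ite, sub_zero]

theorem distinctSum_mul_left (c : R) (f : ι → ι → ι → R) :
    distinctSum (fun i j k => c * f i j k) = c * distinctSum f := by
  simp only [distinctSum, mul_sum, mul_ite, mul_zero]

theorem distinctSum_swap_left {M : Type*} [AddCommMonoid M] (f : ι → ι → ι → M) :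
    distinctSum (fun i j k => f j i k) = distinctSum f := by
  unfold distinctSum
  rw [sum_comm]
  refine sum_congr rfl fun i _ => sum_congr rfl fun j _ => sum_congr rfl fun k _ => ?_
  exact if_congr (by tauto) rfl rfl

theorem distinctSum_swap_right {M : Type*} [AddCommMonoid M] (f : ι → ι → ι → M) :
    distinctSum (fun i j k => f i k j) = distinctSum f := by
  unfold distinctSum
  refine sum_congr rfl fun i _ => ?_
  rw [sum_comm]
  refine sum_congr rfl fun j _ => sum_congr rfl fun k _ => ?_
  exact if_congr (by tauto) rfl rfl

theorem distinctSum_symmSum (f : ι → ι → ι → R) :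
    distinctSum (symmSum f) = 6 * distinctSum f := by
  have swap_right := distinctSum_swap_right f
  have swap_left := distinctSum_swap_left f
  have rotate : distinctSum (fun i j k => f j k i) = distinctSum f :=
    (distinctSum_swap_left fun i j k => f i k j).trans swap_right
  have rotate' : distinctSum (fun i j k => f k i j) = distinctSum f :=
    (distinctSum_swap_right fun i j k => f j i k).trans swap_left
  have reverse : distinctSum (fun i j k => f k j i) = distinctSum f :=
    (distinctSum_swap_left fun i j k => f k i j).trans rotate'
  unfold symmSum
  simp only [distinctSum_add, swap_right, swap_left, rotate, rotate', reverse]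
  ring

theorem distinctSum_eq (f : ι → ι → ι → R) :
    distinctSum f = ∑ i, ∑ j, ∑ k, f i j k - ∑ i, ∑ k, f i i k - ∑ i, ∑ j, f i j j
      - ∑ i, ∑ j, f i j i + 2 * ∑ i, f i i i := by
  have inclusion_exclusion (i j k : ι) : (if i ≠ j ∧ i ≠ k ∧ j ≠ k then f i j k else 0) =
      f i j k - (if i = j then f i j k else 0) - (if j = k then f i j k else 0)
        - (if i = k then f i j k else 0)
        + 2 * (if i = j then if i = k then f i j k else 0 else 0) := by
    grind
  simp only [distinctSum, inclusion_exclusion, sum_add_distrib, sum_sub_distrib, ← mul_sum,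
    sum_ite_irrel, sum_ite_eq, sum_const_zero, mem_univ, if_true]

end DistinctSum

section PermLink

/-- The links between the points `(i, π i)` of the graph of a permutation `π`. -/
def permLink {α : Type*} [DecidableEq α] (π : Perm α) (i j : α) : ℚ := link (i, π i) (j, π j)

/-- The number of fixed points of `f`, as a rational number. -/
def fixCount {α : Type*} [Fintype α] [DecidableEq α] (f : α → α) : ℚ := #{x | f x = x}

variable {α : Type*} [DecidableEq α] (π : Perm α)

theorem permLink_eq_ite (i j : α) : permLink π i j = if π i = j then 1 else 0 := rfl

theorem permLink_mul_self (i j : α) : permLink π i j * permLink π i j = permLink π i j := by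
  simp [permLink_eq_ite]

theorem permLink_mul_diag (i j : α) :
    permLink π i j * permLink π j j = if i = j then permLink π i i else 0 := by
  grind [permLink_eq_ite, π.injective.eq_iff]

variable [Fintype α]

theorem sum_permLink_right (i : α) : ∑ j, permLink π i j = 1 := by
  simp [permLink_eq_ite]

theorem sum_permLink_left (j : α) : ∑ i, permLink π i j = 1 := by
  simp [permLink_eq_ite, ← Perm.eq_inv_iff_eq]

theorem sum_permLink_diag : ∑ i, permLink π i i = fixCount π := by
  simp [permLink_eq_ite, fixCount]

theorem sum_sum_permLink_mul_swap :
    ∑ i, ∑ j, permLink π i j * permLink π j i = fixCount π^[2] := by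
  simp only [permLink_eq_ite, ite_mul, one_mul, zero_mul, sum_ite_eq, mem_univ, if_true]
  simp [fixCount]

theorem sum_sum_sum_permLink_cycle :
    ∑ i, ∑ j, ∑ k, permLink π i j * permLink π j k * permLink π k i = fixCount π^[3] := by
  simp only [permLink_eq_ite, ite_mul, one_mul, zero_mul]
  simp [fixCount]

theorem fixCount_perm : fixCount π = π.partition.parts.count 1 := by
  rw [← card_filter_minimalPeriod_eq_one]
  simp only [minimalPeriod_eq_one_iff_isFixedPt]
  rfl

theorem fixCount_iterate_of_prime {m : ℕ} (hm : m.Prime) :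
    fixCount π^[m] = π.partition.parts.count 1 + m * π.partition.parts.count m := by
  have split (x : α) : π^[m] x = x ↔ minimalPeriod π x = 1 ∨ minimalPeriod π x = m := by
    rw [← Nat.dvd_prime hm, ← isPeriodicPt_iff_minimalPeriod_dvd]
    rfl
  have disjoint : Disjoint ({x | minimalPeriod π x = 1} : Finset α)
      ({x | minimalPeriod π x = m} : Finset α) :=
    disjoint_filter.2 fun x _ h1 hx => hm.one_lt.ne (h1.symm.trans hx)
  simp only [fixCount, split, filter_or]
  rw [card_union_of_disjoint disjoint, card_filter_minimalPeriod_eq_one,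
    card_filter_minimalPeriod_eq, Nat.cast_add, Nat.cast_mul]

variable (α) in
theorem distinctSum_one :
    distinctSum (fun _ _ _ : α => (1 : ℚ)) =
      Fintype.card α * (Fintype.card α - 1) * (Fintype.card α - 2) := by
  simp only [distinctSum_eq, sum_const, card_univ, nsmul_eq_mul]
  ring

theorem distinctSum_permLink_diag :
    distinctSum (fun i _ _ => permLink π i i) =
      fixCount π * (Fintype.card α - 1) * (Fintype.card α - 2) := by
  simp only [distinctSum_eq, sum_const, card_univ, nsmul_eq_mul, ← mul_sum, sum_permLink_diag]
  ring

theorem distinctSum_permLink :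
    distinctSum (fun i j _ => permLink π i j) =
      (Fintype.card α - fixCount π) * (Fintype.card α - 2) := by
  simp only [distinctSum_eq, sum_const, card_univ, nsmul_eq_mul, ← mul_sum, sum_permLink_diag,
    sum_permLink_right]
  ring

theorem distinctSum_permLink_mul_swap :
    distinctSum (fun i j _ => permLink π i j * permLink π j i) =
      (fixCount π^[2] - fixCount π) * (Fintype.card α - 2) := by
  simp only [distinctSum_eq, sum_const, card_univ, nsmul_eq_mul, ← mul_sum, sum_permLink_diag,
    sum_sum_permLink_mul_swap, permLink_mul_self]
  ring

theorem distinctSum_permLink_diag_mul_diag :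
    distinctSum (fun i j _ => permLink π i i * permLink π j j) =
      fixCount π * (fixCount π - 1) * (Fintype.card α - 2) := by
  simp only [distinctSum_eq, sum_const, card_univ, nsmul_eq_mul, ← mul_sum, ← sum_mul,
    sum_permLink_diag, permLink_mul_self]
  ring

theorem distinctSum_permLink_diag_mul :
    distinctSum (fun i j k => permLink π i i * permLink π j k) =
      fixCount π * (Fintype.card α - fixCount π) := by
  simp only [distinctSum_eq, sum_const, card_univ, nsmul_eq_mul, ← mul_sum, ← sum_mul,
    sum_permLink_diag, sum_permLink_right, sum_permLink_left, permLink_mul_self]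
  ring

theorem distinctSum_permLink_mul :
    distinctSum (fun i j k => permLink π i j * permLink π j k) =
      Fintype.card α - fixCount π^[2] := by
  simp only [distinctSum_eq, sum_const, card_univ, nsmul_eq_mul, ← mul_sum, mul_one,
    sum_permLink_diag, sum_sum_permLink_mul_swap, sum_permLink_right, permLink_mul_self,
    permLink_mul_diag, sum_ite_eq, mem_univ, if_true]
  ring

theorem distinctSum_permLink_diag_mul_diag_mul_diag :
    distinctSum (fun i j k => permLink π i i * permLink π j j * permLink π k k) =
      fixCount π * (fixCount π - 1) * (fixCount π - 2) := by
  have merge_outer (i j : α) : permLink π i i * permLink π j j * permLink π i i =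
      permLink π i i * permLink π j j := by
    rw [mul_right_comm, permLink_mul_self]
  have merge_right (i j : α) : permLink π i i * permLink π j j * permLink π j j =
      permLink π i i * permLink π j j := by
    rw [mul_assoc, permLink_mul_self]
  simp only [distinctSum_eq, merge_outer, merge_right, permLink_mul_self, ← mul_sum, ← sum_mul,
    sum_permLink_diag]
  ring

theorem distinctSum_permLink_cycle :
    distinctSum (fun i j k => permLink π i j * permLink π j k * permLink π k i) =
      fixCount π^[3] - fixCount π := by
  have merge_left (i k : α) : permLink π i i * permLink π i k * permLink π k i =
      if i = k then permLink π i i else 0 := by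
    grind [permLink_eq_ite]
  have merge_right (i j : α) : permLink π i j * permLink π j j * permLink π j i =
      if i = j then permLink π i i else 0 := by
    grind [permLink_eq_ite, π.injective.eq_iff]
  have merge_outer (i j : α) : permLink π i j * permLink π j i * permLink π i i =
      if i = j then permLink π i i else 0 := by
    grind [permLink_eq_ite, π.injective.eq_iff]
  simp only [distinctSum_eq, sum_sum_sum_permLink_cycle, merge_left, merge_right, merge_outer,
    sum_ite_eq, mem_univ, if_true, sum_permLink_diag, permLink_mul_self]
  ring

theorem distinctSum_linkPoly_permLink :
    distinctSum (linkPoly (permLink π)) =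
      5 * (Fintype.card α * (Fintype.card α - 1) * (Fintype.card α - 2))
        + 3 * (fixCount π * (Fintype.card α - 1) * (Fintype.card α - 2))
        - 3 * ((Fintype.card α - fixCount π) * (Fintype.card α - 2))
        + 3 * ((fixCount π^[2] - fixCount π) * (Fintype.card α - 2))
        - 6 * (fixCount π * (fixCount π - 1) * (Fintype.card α - 2))
        + 12 * (fixCount π * (Fintype.card α - fixCount π))
        - 9 * (Fintype.card α - fixCount π^[2])
        - 2 * (fixCount π * (fixCount π - 1) * (fixCount π - 2))
        + 2 * (fixCount π^[3] - fixCount π) := by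
  have const_five : distinctSum (fun _ _ _ : α => (5 : ℚ)) =
      5 * (Fintype.card α * (Fintype.card α - 1) * (Fintype.card α - 2)) := by
    rw [← distinctSum_one, ← distinctSum_mul_left, mul_one]
  unfold linkPoly
  simp only [distinctSum_add, distinctSum_sub, distinctSum_mul_left, const_five,
    distinctSum_permLink_diag, distinctSum_permLink, distinctSum_permLink_mul_swap,
    distinctSum_permLink_diag_mul_diag, distinctSum_permLink_diag_mul, distinctSum_permLink_mul,
    distinctSum_permLink_diag_mul_diag_mul_diag, distinctSum_permLink_cycle]

end PermLink

section Occurrences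

variable {α : Type*} [Fintype α] [LinearOrder α]

/-- The number of occurrences of the pattern 132 in a permutation of a finite linear order. -/
def occ132 (π : Perm α) : ℕ :=
  #{x : α × α × α | IsOcc132 (· < ·) (x.1, π x.1) (x.2.1, π x.2.1) (x.2.2, π x.2.2)}

theorem occ132_conj (π σ : Perm α) :
    occ132 (σ * π * σ⁻¹) = #{x : α × α × α | IsOcc132 (· < ·) ((x.1, π x.1).map σ σ)
      ((x.2.1, π x.2.1).map σ σ) ((x.2.2, π x.2.2).map σ σ)} := by
  refine (card_equiv (σ.prodCongr (σ.prodCongr σ)) fun x => ?_).symm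
  rw [mem_filter_univ, mem_filter_univ]
  simp

theorem occ132Prob_eq_zero {P Q R : α × α} (h : ¬(P.1 ≠ Q.1 ∧ P.1 ≠ R.1 ∧ Q.1 ≠ R.1)) :
    occ132Prob P Q R = 0 := by
  refine expect_eq_zero fun σ _ => if_neg ?_
  rintro ⟨hPQ, hQR, -⟩
  exact h ⟨fun e => hPQ.ne (congrArg σ e), fun e => (hPQ.trans hQR).ne (congrArg σ e),
    fun e => hQR.ne (congrArg σ e)⟩

theorem expect_occ132_conj_eq_distinctSum (π : Perm α) :
    𝔼 σ : Perm α, (occ132 (σ * π * σ⁻¹) : ℚ) =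
      distinctSum fun i j k => occ132Prob (i, π i) (j, π j) (k, π k) := by
  have prob_eq_ite (i j k : α) : occ132Prob (i, π i) (j, π j) (k, π k) =
      if i ≠ j ∧ i ≠ k ∧ j ≠ k then occ132Prob (i, π i) (j, π j) (k, π k) else 0 := by
    split_ifs with h
    · rfl
    · exact occ132Prob_eq_zero h
  simp only [occ132_conj, natCast_card_filter, expect_sum_comm, Fintype.sum_prod_type, distinctSum,
    ← prob_eq_ite]
  rfl

theorem distinctSum_occ132Prob (π : Perm α) :
    180 * distinctSum (fun i j k => occ132Prob (i, π i) (j, π j) (k, π k)) =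
      distinctSum (linkPoly (permLink π)) := by
  let prob (i j k : α) : ℚ := occ132Prob (i, π i) (j, π j) (k, π k)
  have symm_eq (i j k : α) (hij : i ≠ j) (hik : i ≠ k) (hjk : j ≠ k) :
      180 * symmSum prob i j k = symmSum (linkPoly (permLink π)) i j k := by
    have hinj : Injective ![i, j, k] := by
      intro a b
      fin_cases a <;> fin_cases b <;> simp_all [eq_comm]
    exact symmSum_occ132Prob (P := fun a => (![i, j, k] a, π (![i, j, k] a))) hinj
      (π.injective.comp hinj)
  have six_mul : 6 * (180 * distinctSum prob) = 6 * distinctSum (linkPoly (permLink π)) := by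
    rw [← distinctSum_symmSum (linkPoly _), ← distinctSum_congr symm_eq, distinctSum_mul_left,
      distinctSum_symmSum]
    ring
  exact mul_left_cancel₀ (by norm_num) six_mul

theorem expect_occ132_conj (π : Perm α) {N p q r : ℚ} (hN : N = Fintype.card α)
    (hp : p = π.partition.parts.count 1) (hq : q = π.partition.parts.count 2)
    (hr : r = π.partition.parts.count 3) :
    𝔼 σ : Perm α, (occ132 (σ * π * σ⁻¹) : ℚ) =
      N * (N - 1) * (N - 2) / 36 + (N + 1) * (N - 3) * (p - 1) / 60
        - (N + 1) * ((p - 1) * (p - 2) / 2 + q - 1) / 60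
        - (N + 1) * ((p - 1) * (p - 2) / 2 - q) / 20
        - ((p - 1) * (p - 2) * (p - 3) / 3 - p - r + 2) / 30 := by
  have fix_one : fixCount π = p := by rw [fixCount_perm, hp]
  have fix_two : fixCount π^[2] = p + 2 * q := by
    rw [fixCount_iterate_of_prime π Nat.prime_two, hp, hq, Nat.cast_ofNat]
  have fix_three : fixCount π^[3] = p + 3 * r := by
    rw [fixCount_iterate_of_prime π Nat.prime_three, hp, hr, Nat.cast_ofNat]
  have total := distinctSum_occ132Prob π
  rw [distinctSum_linkPoly_permLink, fix_one, fix_two, fix_three, ← hN] at total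
  rw [expect_occ132_conj_eq_distinctSum]
  linear_combination total / 180

theorem card_213_eq_occ132_rev {n : ℕ} (π : Perm (Fin n)) :
    #{x : Fin n × Fin n × Fin n |
        x.1 < x.2.1 ∧ x.2.1 < x.2.2 ∧ π x.2.1 < π x.1 ∧ π x.1 < π x.2.2} =
      occ132 (Fin.revPerm * π * Fin.revPerm⁻¹) := by
  rw [occ132_conj]
  refine card_nbij' (fun x => (x.2.2, x.2.1, x.1)) (fun x => (x.2.2, x.2.1, x.1)) ?_ ?_
    (fun _ _ => rfl) (fun _ _ => rfl) <;>
  · intro x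
    simp only [IsOcc132, coe_filter, mem_univ, true_and, Set.mem_ofPred_eq, Prod.map_apply,
      Fin.revPerm_apply, Fin.rev_lt_rev]
    tauto

end Occurrences

section ConjClass

variable {n : ℕ} {lam : n.Partition}

theorem conj_mem_conjClass_iff {σ π : Perm (Fin n)} :
    σ * π * σ⁻¹ ∈ conjClass n lam ↔ π ∈ conjClass n lam := by
  have partition_eq : (σ * π * σ⁻¹).partition = π.partition :=
    (Perm.partition_eq_of_isConj.1 (isConj_iff.2 ⟨σ, rfl⟩)).symm
  simp only [conjClass, mem_filter, mem_univ, true_and, partition_eq]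

variable (lam) in
theorem sum_conjClass_conj {M : Type*} [AddCommMonoid M] (f : Perm (Fin n) → M)
    (σ : Perm (Fin n)) :
    ∑ π ∈ conjClass n lam, f (σ * π * σ⁻¹) = ∑ π ∈ conjClass n lam, f π :=
  sum_equiv (MulAut.conj σ).toEquiv (fun _ => conj_mem_conjClass_iff.symm) fun _ _ => rfl

theorem sum_conjClass_eq_of_expect_conj {f : Perm (Fin n) → ℚ} {c : ℚ}
    (h : ∀ π ∈ conjClass n lam, 𝔼 σ : Perm (Fin n), f (σ * π * σ⁻¹) = c) :
    ∑ π ∈ conjClass n lam, f π = #(conjClass n lam) * c :=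
  calc ∑ π ∈ conjClass n lam, f π
      = 𝔼 σ : Perm (Fin n), ∑ π ∈ conjClass n lam, f (σ * π * σ⁻¹) := by
        simp only [sum_conjClass_conj, Fintype.expect_const]
    _ = ∑ π ∈ conjClass n lam, 𝔼 σ : Perm (Fin n), f (σ * π * σ⁻¹) := expect_sum_comm _ _ _
    _ = #(conjClass n lam) * c := by rw [sum_congr rfl h, sum_const, nsmul_eq_mul]

end ConjClass

theorem cast_choose_three (K : Type*) [Field K] [CharZero K] (n : ℕ) :
    (n.choose 3 : K) = n * (n - 1) * (n - 2) / 6 := by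
  induction n with
  | zero => simp
  | succ n ih =>
    rw [Nat.choose_succ_succ', Nat.cast_add, Nat.cast_choose_two, ih, Nat.cast_succ]
    ring

theorem stmt9 (n : ℕ) (hn : 3 ≤ n) (lam : n.Partition)
    (p q r X₁ X₂ X₃ X₄ : ℚ)
    (hp : p = (lam.parts.count 1 : ℚ)) (hq : q = (lam.parts.count 2 : ℚ))
    (hr : r = (lam.parts.count 3 : ℚ))
    (hX1 : X₁ = p - 1) (hX2 : X₂ = (p - 1) * (p - 2) / 2 + q - 1)
    (hX3 : X₃ = (p - 1) * (p - 2) / 2 - q)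
    (hX4 : X₄ = (p - 1) * (p - 2) * (p - 3) / 3 - p - r + 2) :
    ((∑ π ∈ conjClass n lam,
      ((((Finset.univ : Finset (Fin n × Fin n × Fin n)).filter fun x =>
          x.1 < x.2.1 ∧ x.2.1 < x.2.2 ∧ π x.1 < π x.2.2 ∧ π x.2.2 < π x.2.1).card : ℚ)))
      = ((conjClass n lam).card : ℚ) *
        ((n.choose 3 : ℚ) / 6 + ((n : ℚ) + 1) * ((n : ℚ) - 3) * X₁ / 60
          - ((n : ℚ) + 1) * X₂ / 60 - ((n : ℚ) + 1) * X₃ / 20 - X₄ / 30)) ∧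
    ((∑ π ∈ conjClass n lam,
      ((((Finset.univ : Finset (Fin n × Fin n × Fin n)).filter fun x =>
          x.1 < x.2.1 ∧ x.2.1 < x.2.2 ∧ π x.2.1 < π x.1 ∧ π x.1 < π x.2.2).card : ℚ)))
      = ((conjClass n lam).card : ℚ) *
        ((n.choose 3 : ℚ) / 6 + ((n : ℚ) + 1) * ((n : ℚ) - 3) * X₁ / 60
          - ((n : ℚ) + 1) * X₂ / 60 - ((n : ℚ) + 1) * X₃ / 20 - X₄ / 30)) := by
  have sum_occ132 := sum_conjClass_eq_of_expect_conj (lam := lam) (f := fun π => (occ132 π : ℚ))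
    fun π hπ => by
      have parts_eq : π.partition.parts = lam.parts := (mem_filter.1 hπ).2
      rw [← parts_eq] at hp hq hr
      exact expect_occ132_conj π (congrArg Nat.cast (Fintype.card_fin n).symm) hp hq hr
  have value_eq : (n : ℚ) * (n - 1) * (n - 2) / 36 = n.choose 3 / 6 := by
    rw [cast_choose_three ℚ]
    ring
  rw [value_eq, ← hX4, ← hX3, ← hX2, ← hX1] at sum_occ132
  refine ⟨sum_occ132, ?_⟩
  simp only [card_213_eq_occ132_rev]
  rw [sum_conjClass_conj lam (fun π => (occ132 π : ℚ)), sum_occ132]
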